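/- For every closed DLA term L, either the equation L = EMPTY is derivable from the axioms of DLA, or there exist finitely many atomic constants u1, ..., uk (k >= 1) such that the equation L = u1 PLUS u2 PLUS ... PLUS uk is derivable from the axioms of DLA. -/

import Mathlib

/-- Closed terms of Data Linkage Algebra (DLA), parameterized by the sets
`S` of spots, `F` of fields, `A` of atomic objects and `V` of values. -/
inductive DLATerm (S F A V : Type) : Type
  | empty : DLATerm S F A V
  | slink : S → A → DLATerm S F A V
  | pflink : A → F → DLATerm S F A V
  | flink : A → F → A → DLATerm S F A V
  | valass : A → V → DLATerm S F A V
  | plus : DLATerm S F A V → DLATerm S F A V → DLATerm S F A V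
  | ovr : DLATerm S F A V → DLATerm S F A V → DLATerm S F A V

namespace DLATerm

variable {S F A V : Type}

/-- The atomic constants of DLA: spot links, partial field links, field links
and value associations. -/
inductive IsAtomic : DLATerm S F A V → Prop
  | slink (s : S) (a : A) : IsAtomic (slink s a)
  | pflink (a : A) (f : F) : IsAtomic (pflink a f)
  | flink (a : A) (f : F) (b : A) : IsAtomic (flink a f b)
  | valass (a : A) (n : V) : IsAtomic (valass a n)

/-- Two atomic constants are clashing if they are two spot links via the same
spot, two (partial) field links from the same atomic object via the same
field, or two value associations with the same atomic object. -/
inductive Clashing : DLATerm S F A V → DLATerm S F A V → Prop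
  | slink (s : S) (a b : A) : Clashing (slink s a) (slink s b)
  | pf_pf (a : A) (f : F) : Clashing (pflink a f) (pflink a f)
  | pf_fl (a : A) (f : F) (b : A) : Clashing (pflink a f) (flink a f b)
  | fl_pf (a : A) (f : F) (b : A) : Clashing (flink a f b) (pflink a f)
  | fl_fl (a : A) (f : F) (b c : A) : Clashing (flink a f b) (flink a f c)
  | valass (a : A) (n m : V) : Clashing (valass a n) (valass a m)

/-- Derivability of an equation between closed DLA terms from the axioms of
DLA by equational logic. -/
inductive Derivable : DLATerm S F A V → DLATerm S F A V → Prop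
  | refl (x) : Derivable x x
  | symm {x y} : Derivable x y → Derivable y x
  | trans {x y z} : Derivable x y → Derivable y z → Derivable x z
  | plus_congr {x x' y y'} : Derivable x x' → Derivable y y' →
      Derivable (plus x y) (plus x' y')
  | ovr_congr {x x' y y'} : Derivable x x' → Derivable y y' →
      Derivable (ovr x y) (ovr x' y')
  -- X + Y = Y + X
  | plus_comm (x y) : Derivable (plus x y) (plus y x)
  -- X + (Y + Z) = (X + Y) + Z
  | plus_assoc (x y z) : Derivable (plus x (plus y z)) (plus (plus x y) z)
  -- X + X = X
  | plus_idem (x) : Derivable (plus x x) x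
  -- X + ∅ = X
  | plus_empty (x) : Derivable (plus x empty) x
  -- ∅ ⊕ X = X
  | empty_ovr (x) : Derivable (ovr empty x) x
  -- X ⊕ ∅ = X
  | ovr_empty (x) : Derivable (ovr x empty) x
  -- X ⊕ (Y + Z) = (X ⊕ Y) + (X ⊕ Z)
  | ovr_plus (x y z) : Derivable (ovr x (plus y z)) (plus (ovr x y) (ovr x z))
  -- (X + u) ⊕ v = X ⊕ v for clashing atomic constants u, v
  | clash (x : DLATerm S F A V) {u v : DLATerm S F A V} :
      IsAtomic u → IsAtomic v → Clashing u v →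
      Derivable (ovr (plus x u) v) (ovr x v)
  -- (X + u) ⊕ v = (X ⊕ v) + u for non-clashing atomic constants u, v
  | noclash (x : DLATerm S F A V) {u v : DLATerm S F A V} :
      IsAtomic u → IsAtomic v → ¬ Clashing u v →
      Derivable (ovr (plus x u) v) (plus (ovr x v) u)

/-- Basic terms: built from `empty` and the atomic constants using only `plus`. -/
inductive IsBasic : DLATerm S F A V → Prop
  | empty : IsBasic empty
  | atom {u : DLATerm S F A V} : IsAtomic u → IsBasic u
  | plus {x y : DLATerm S F A V} : IsBasic x → IsBasic y → IsBasic (plus x y)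

end DLATerm

/-!
Call a term normalizable if it is derivably equal to a left-associated sum
`((∅ + u₁) + ⋯) + u_k` of atomic constants, with `k = 0` allowed. Every closed term is
normalizable, by structural induction. Sums are handled by associativity. For an override
`X ⊕ Y` of normalizable terms, distributivity of `⊕` over `+` on the right reduces to the case
where `Y` is an atomic constant `v`; then the two clash axioms peel the summands of `X` off one
by one, each being either deleted or moved outside, until `∅ ⊕ v = v` remains
(`Normalizable.ovr_atom`). Finally, the leading `∅` is absorbed when `k ≥ 1`.
-/

namespace DLATerm

/-- `L` is derivably equal to a left-associated sum, starting from `empty`, of a possibly empty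
list of atomic constants. -/
def Normalizable {S F A V : Type} (L : DLATerm S F A V) : Prop :=
  ∃ l : List (DLATerm S F A V), (∀ v ∈ l, v.IsAtomic) ∧ Derivable L (l.foldl plus empty)

theorem Derivable.empty_plus {S F A V : Type} (x : DLATerm S F A V) :
    Derivable (plus empty x) x :=
  (plus_comm _ _).trans (plus_empty x)

theorem Derivable.foldl_congr {S F A V : Type} (l : List (DLATerm S F A V)) :
    ∀ {x y : DLATerm S F A V}, Derivable x y → Derivable (l.foldl plus x) (l.foldl plus y) := by
  induction l with
  | nil => exact fun h => h
  | cons u l ih => exact fun h => ih (h.plus_congr (.refl u))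

theorem Normalizable.of_derivable {S F A V : Type} {x y : DLATerm S F A V}
    (h : Derivable x y) (hy : Normalizable y) : Normalizable x := by
  obtain ⟨l, hl, hd⟩ := hy
  exact ⟨l, hl, h.trans hd⟩

theorem Normalizable.empty {S F A V : Type} :
    Normalizable (DLATerm.empty : DLATerm S F A V) :=
  ⟨[], by simp, .refl _⟩

theorem Normalizable.plus_atom {S F A V : Type} {x u : DLATerm S F A V}
    (hx : Normalizable x) (hu : u.IsAtomic) : Normalizable (plus x u) := by
  obtain ⟨l, hl, hd⟩ := hx
  refine ⟨l ++ [u], ?_, ?_⟩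
  · intro v hv
    rcases List.mem_append.1 hv with hv | hv
    · exact hl v hv
    · rwa [List.mem_singleton.1 hv]
  · simpa using hd.plus_congr (.refl u)

theorem Normalizable.atom {S F A V : Type} {u : DLATerm S F A V}
    (hu : u.IsAtomic) : Normalizable u :=
  .of_derivable (Derivable.empty_plus u).symm (Normalizable.empty.plus_atom hu)

theorem Normalizable.plus {S F A V : Type} {x y : DLATerm S F A V}
    (hx : Normalizable x) (hy : Normalizable y) : Normalizable (plus x y) := by
  obtain ⟨m, hm, hd⟩ := hy
  refine .of_derivable ((Derivable.refl x).plus_congr hd) ?_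
  clear hd
  induction m using List.reverseRecOn with
  | nil => exact .of_derivable (.plus_empty x) hx
  | append_singleton m v ih =>
    rw [List.foldl_append]
    exact .of_derivable (.plus_assoc _ _ _)
      ((ih fun w hw => hm w (by simp [hw])).plus_atom (hm v (by simp)))

/-- Overriding by a single atomic constant `v`: each summand on the left is deleted if it clashes
with `v` and kept otherwise. -/
theorem Normalizable.ovr_atom {S F A V : Type} {x v : DLATerm S F A V}
    (hx : Normalizable x) (hv : v.IsAtomic) : Normalizable (ovr x v) := by
  obtain ⟨l, hl, hd⟩ := hx
  refine .of_derivable (hd.ovr_congr (.refl v)) ?_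
  clear hd
  induction l using List.reverseRecOn with
  | nil => exact .of_derivable (.empty_ovr v) (.atom hv)
  | append_singleton l u ih =>
    have hu : u.IsAtomic := hl u (by simp)
    have ih' := ih fun w hw => hl w (by simp [hw])
    rw [List.foldl_append]
    by_cases hc : Clashing u v
    · exact .of_derivable (.clash _ hu hv hc) ih'
    · exact .of_derivable (.noclash _ hu hv hc) (ih'.plus_atom hu)

theorem Normalizable.ovr {S F A V : Type} {x y : DLATerm S F A V}
    (hx : Normalizable x) (hy : Normalizable y) : Normalizable (ovr x y) := by
  obtain ⟨m, hm, hd⟩ := hy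
  refine .of_derivable ((Derivable.refl x).ovr_congr hd) ?_
  clear hd
  induction m using List.reverseRecOn with
  | nil => exact .of_derivable (.ovr_empty x) hx
  | append_singleton m v ih =>
    rw [List.foldl_append]
    exact .of_derivable (.ovr_plus _ _ _)
      ((ih fun w hw => hm w (by simp [hw])).plus (hx.ovr_atom (hm v (by simp))))

theorem normalizable {S F A V : Type} (L : DLATerm S F A V) : Normalizable L := by
  induction L with
  | empty => exact .empty
  | slink s a => exact .atom (.slink s a)
  | pflink a f => exact .atom (.pflink a f)
  | flink a f b => exact .atom (.flink a f b)
  | valass a n => exact .atom (.valass a n)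
  | plus x y hx hy => exact hx.plus hy
  | ovr x y hx hy => exact hx.ovr hy

end DLATerm

/-- For every closed DLA term `L`, either `L = ∅` is derivable from the axioms
of DLA, or there are atomic constants `u₁, …, u_k` (`k ≥ 1`, here `u₁ = u` and
`u₂, …, u_k` given by the list `us`) such that
`L = u₁ + u₂ + ⋯ + u_k` (associated to the left) is derivable. -/
theorem dla_empty_or_sum_of_atoms {S F A V : Type}
    [Fintype S] [Fintype F] [Fintype A] [Fintype V] (L : DLATerm S F A V) :
    DLATerm.Derivable L DLATerm.empty ∨
      ∃ (u : DLATerm S F A V) (us : List (DLATerm S F A V)),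
        u.IsAtomic ∧ (∀ v ∈ us, v.IsAtomic) ∧
        DLATerm.Derivable L (us.foldl DLATerm.plus u) := by
  obtain ⟨l, hl, hd⟩ := L.normalizable
  cases l with
  | nil => exact .inl hd
  | cons u us =>
    exact .inr ⟨u, us, hl u (by simp), fun v hv => hl v (by simp [hv]),
      hd.trans (.foldl_congr us (.empty_plus u))⟩
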